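/- arXiv:1502.03184 — 4 statements merged into one kernel-verified Lean document; each statement's English description precedes it below -/
import Mathlib

section
/- Let f ∈ R be a homogeneous polynomial. Then for every integer e ≥ 1, the radical of the test ideal τ(f^{1−1/p^e}) equals the radical of the test ideal τ(f^{1−1/p}). (In particular, since the non-F-pure ideal σ(div(f)) equals τ(f^{1−1/p^e}) for all sufficiently large e, √τ(f^{1−1/p}) = √σ(div(f)).) -/
/-!
Let `A` be a ring of characteristic `p` that is projective as a module over itself through the
Frobenius. The ideal `I^{[p^e]}` is the extension of `I` along the `e`-fold Frobenius, and since an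
element of a projective module `M` lies in `I M` iff every linear form sends it into `I`, this
extension commutes with arbitrary intersections and with colons by elements. The former gives
`τ(f^{1-1/p^e}) ≤ P` iff `f^{p^e-1} ∈ P^{[p^e]}`. As the radical of an ideal is the intersection of
the primes above it, it is enough that for prime `P` this condition does not depend on `e ≥ 1`.

Since `f^{p^{e+1}-1} = (f^{p-1})^{p^e} f^{p^e-1}`, it lies in `P^{[p^{e+1}]}` iff `f^{p^e-1}` lies
in `(P^{[p]} : f^{p-1})^{[p^e]}`. If `f^{p-1} ∉ P^{[p]}`, then the colon is contained in `P`,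
because `P^{[p]}` is `P`-primary, and induction on `e` applies; otherwise it is the whole ring.

For a polynomial ring over a field, the Frobenius is `x_i ↦ x_i^p` followed by the Frobenius on
coefficients: the first is free on the monomials with all exponents `< p`, the second is a base
change of a field extension.
-/

open MvPolynomial

noncomputable section

/-- `I^{[e]}`-style bracket power: the ideal generated by `q`-th powers of elements of `I`. -/
def bracketPow {A : Type*} [CommRing A] (I : Ideal A) (q : ℕ) : Ideal A :=
  Ideal.span ((fun u => u ^ q) '' (I : Set A))

/-- The test ideal `τ(f^{1 - 1/p^e})`: the smallest ideal `a` with `f^{p^e - 1} ∈ a^{[e]}`. -/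
def testIdeal {A : Type*} [CommRing A] (p : ℕ) (f : A) (e : ℕ) : Ideal A :=
  sInf {a : Ideal A | f ^ (p ^ e - 1) ∈ bracketPow a (p ^ e)}

/-- The homogeneous maximal ideal `m = (x_0, ..., x_n)`. -/
def mxI (k : Type*) [Field k] (n : ℕ) : Ideal (MvPolynomial (Fin (n + 1)) k) :=
  Ideal.span (Set.range (X : Fin (n + 1) → MvPolynomial (Fin (n + 1)) k))

/-- The set of degrees of homogeneous elements of `(m^{[e]} : τ) \ m^{[e]}`. -/
def MeSet (k : Type*) [Field k] (n p : ℕ) (τ : Ideal (MvPolynomial (Fin (n + 1)) k))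
    (e : ℕ) : Set ℕ :=
  {d : ℕ | ∃ g : MvPolynomial (Fin (n + 1)) k,
    g ∈ (bracketPow (mxI k n) (p ^ e)).colon τ ∧
    g ∉ bracketPow (mxI k n) (p ^ e) ∧ g.IsHomogeneous d}

/-- `M_e`: the minimal degree of a homogeneous element of `(m^{[e]} : τ) \ m^{[e]}`. -/
def Me (k : Type*) [Field k] (n p : ℕ) (τ : Ideal (MvPolynomial (Fin (n + 1)) k))
    (e : ℕ) : ℕ :=
  sInf (MeSet k n p τ e)

/-- `e_0`: the least `e` with `τ ⊄ m^{[e]}`. -/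
def e0 (k : Type*) [Field k] (n p : ℕ) (τ : Ideal (MvPolynomial (Fin (n + 1)) k)) : ℕ :=
  sInf {e : ℕ | ¬ τ ≤ bracketPow (mxI k n) (p ^ e)}

lemma mem_smul_top_iff_forall_dual {A M : Type*} [CommRing A] [AddCommGroup M] [Module A M]
    [Module.Projective A M] {I : Ideal A} {x : M} :
    x ∈ I • (⊤ : Submodule A M) ↔ ∀ T : Module.Dual A M, T x ∈ I := by
  refine ⟨fun hx T => ?_, fun hx => ?_⟩
  · have hle : I • (⊤ : Submodule A M) ≤ Submodule.comap T I :=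
      Submodule.smul_le.2 fun a ha m _ => by simpa using I.mul_mem_right (T m) ha
    exact hle hx
  · obtain ⟨s, hs⟩ := Module.projective_def.1 ‹Module.Projective A M›
    rw [← hs x, Finsupp.linearCombination_apply]
    exact Submodule.sum_mem _ fun m _ =>
      Submodule.smul_mem_smul (hx (Finsupp.lapply m ∘ₗ s)) trivial

lemma projective_trans {A B M : Type*} [CommRing A] [CommRing B] [Algebra A B] [AddCommGroup M]
    [Module A M] [Module B M] [IsScalarTower A B M] [Module.Projective A B]
    [Module.Projective B M] : Module.Projective A M := by
  classical
  obtain ⟨s, hs⟩ := Module.projective_def.1 ‹Module.Projective B M›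
  have : Module.Projective A (M →₀ B) := .of_equiv' (finsuppLequivDFinsupp A).symm
  exact .of_split (s.restrictScalars A) ((Finsupp.linearCombination B id).restrictScalars A)
    (LinearMap.ext hs)

/-- The ring homomorphism `φ : A → B` makes `B` a projective `A`-module. It is stated for `φ`
rather than for an algebra so that it applies to the Frobenius of `A`, whose module structure on
`A` differs from the canonical one. -/
def ProjectiveRingHom {A B : Type*} [CommRing A] [CommRing B] (φ : A →+* B) : Prop :=
  letI := φ.toAlgebra
  Module.Projective A B

namespace ProjectiveRingHom

variable {A B C : Type*} [CommRing A] [CommRing B] [CommRing C] {φ : A →+* B}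

variable (A) in
lemma id : ProjectiveRingHom (RingHom.id A) :=
  inferInstanceAs (Module.Projective A A)

lemma comp {ψ : B →+* C} (hψ : ProjectiveRingHom ψ) (hφ : ProjectiveRingHom φ) :
    ProjectiveRingHom (ψ.comp φ) := by
  algebraize [φ, ψ, ψ.comp φ]
  have : Module.Projective A B := hφ
  have : Module.Projective B C := hψ
  exact projective_trans (B := B)

lemma of_field {K : Type*} [Field K] (φ : K →+* B) : ProjectiveRingHom φ := by
  algebraize [φ]
  exact Module.Projective.of_free

/-- A converse to `Module.Basis.smulTower`: the family `m` is an `A`-basis of `B`. -/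
lemma of_basis_mul {R ι κ : Type*} [CommRing R] [Algebra R A] [Algebra R B] (φ : A →ₐ[R] B)
    (a : Module.Basis ι R A) (b : Module.Basis (κ × ι) R B) (m : κ → B)
    (hb : ∀ j i, b (j, i) = φ (a i) * m j) : ProjectiveRingHom (φ : A →+* B) := by
  algebraize [(φ : A →+* B)]
  have : IsScalarTower R A B := .of_algebraMap_eq' φ.comp_algebraMap.symm
  let g : (κ →₀ A) →ₗ[A] B := Finsupp.linearCombination A m
  let e : (κ →₀ A) ≃ₗ[R] B := (Finsupp.basis fun _ => a).equiv b (Equiv.sigmaEquivProd κ ι)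
  have hge : g.restrictScalars R = e := (Finsupp.basis fun _ => a).ext fun ⟨j, i⟩ => by
    rw [LinearEquiv.coe_coe, Module.Basis.equiv_apply]
    simp [g, hb, Algebra.smul_def, RingHom.algebraMap_toAlgebra]
  have hg : Function.Bijective g := by
    convert e.bijective using 1
    exact congrArg DFunLike.coe hge
  exact .of_equiv' (LinearEquiv.ofBijective g hg)

lemma mem_map_iff (hφ : ProjectiveRingHom φ) {I : Ideal A} {x : B} :
    x ∈ I.map φ ↔ ∀ T : B →+ A, (∀ a b, T (φ a * b) = a * T b) → T x ∈ I := by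
  algebraize [φ]
  have : Module.Projective A B := hφ
  have hI : x ∈ I.map φ ↔ x ∈ I • (⊤ : Submodule A B) := by
    rw [Ideal.smul_top_eq_map]
    rfl
  rw [hI, mem_smul_top_iff_forall_dual]
  exact ⟨fun h T hT => h { T with map_smul' := hT }, fun h T => h T T.map_smul⟩

lemma map_sInf (hφ : ProjectiveRingHom φ) (S : Set (Ideal A)) :
    (sInf S).map φ = ⨅ I ∈ S, I.map φ := by
  ext x
  simp only [Submodule.mem_iInf, hφ.mem_map_iff, Submodule.mem_sInf]
  tauto

lemma map_colon_singleton (hφ : ProjectiveRingHom φ) (I : Ideal A) (a : A) :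
    (I.colon {a}).map φ = (I.map φ).colon {φ a} := by
  ext x
  simp only [Submodule.mem_colon_singleton, smul_eq_mul, hφ.mem_map_iff]
  refine forall₂_congr fun T hT => ?_
  rw [mul_comm x, hT, mul_comm a]

lemma mvPolynomial_map {σ : Type*} (hφ : ProjectiveRingHom φ) :
    ProjectiveRingHom (MvPolynomial.map (σ := σ) φ) := by
  algebraize [φ]
  let _ := algebraMvPolynomial (σ := σ) (R := A) (S := B)
  have : Module.Projective A B := hφ
  have h : Module.Projective (MvPolynomial σ A) (MvPolynomial σ B) :=
    .of_equiv' (Algebra.IsPushout.equiv A (MvPolynomial σ A) B (MvPolynomial σ B)).toLinearEquiv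
  exact h

end ProjectiveRingHom

/-- Division with remainder by `q` of exponent vectors: `q • s + r ↦ (r, s)`. -/
def expModDivEquiv (σ : Type*) {q : ℕ} (hq : q ≠ 0) :
    (σ →₀ ℕ) ≃ {r : σ →₀ ℕ // ∀ i, r i < q} × (σ →₀ ℕ) where
  toFun l := (⟨l.mapRange (· % q) (Nat.zero_mod q), fun i => Nat.mod_lt _ (by lia)⟩,
    l.mapRange (· / q) (Nat.zero_div q))
  invFun rs := q • rs.2 + rs.1
  left_inv l := by ext i; simp [Nat.div_add_mod]
  right_inv rs := by
    ext i <;> simp [Nat.mul_add_div (Nat.pos_of_ne_zero hq), Nat.mod_eq_of_lt, rs.1.2 i, hq]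

lemma projectiveRingHom_expand (σ R : Type*) [CommRing R] {q : ℕ} (hq : q ≠ 0) :
    ProjectiveRingHom (expand (σ := σ) (R := R) q : MvPolynomial σ R →+* MvPolynomial σ R) :=
  .of_basis_mul (expand q) (basisMonomials σ R)
    ((basisMonomials σ R).reindex (expModDivEquiv σ hq)) (fun r => monomial r 1) fun r s => by
      simp [expModDivEquiv, monomial_mul]

section Frobenius

variable {A : Type*} [CommRing A] {p : ℕ} [ExpChar A p]

lemma ProjectiveRingHom.frobenius_mvPolynomial {σ : Type*}
    (hA : ProjectiveRingHom (frobenius A p)) :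
    ProjectiveRingHom (frobenius (MvPolynomial σ A) p) := by
  have hcomp : frobenius (MvPolynomial σ A) p =
      (map (frobenius A p)).comp (expand (σ := σ) (R := A) p : _ →+* _) :=
    RingHom.ext fun f => (map_frobenius_expand p).symm
  rw [hcomp]
  exact hA.mvPolynomial_map.comp (projectiveRingHom_expand σ A (expChar_ne_zero A p))

lemma ProjectiveRingHom.iterateFrobenius (hA : ProjectiveRingHom (frobenius A p)) (e : ℕ) :
    ProjectiveRingHom (iterateFrobenius A p e) := by
  induction e with
  | zero => simpa only [iterateFrobenius_zero] using ProjectiveRingHom.id A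
  | succ e ih => simpa only [iterateFrobenius_add, iterateFrobenius_one] using ih.comp hA

lemma bracketPow_eq_map_iterateFrobenius (I : Ideal A) (e : ℕ) :
    bracketPow I (p ^ e) = I.map (iterateFrobenius A p e) :=
  rfl

lemma bracketPow_mono {I J : Ideal A} (h : I ≤ J) (q : ℕ) :
    bracketPow I q ≤ bracketPow J q :=
  Ideal.span_mono (Set.image_mono h)

lemma bracketPow_bracketPow (I : Ideal A) (d e : ℕ) :
    bracketPow (bracketPow I (p ^ d)) (p ^ e) = bracketPow I (p ^ (e + d)) := by
  simp only [bracketPow_eq_map_iterateFrobenius, Ideal.map_map, iterateFrobenius_add]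

lemma bracketPow_colon_singleton (hA : ProjectiveRingHom (frobenius A p)) (I : Ideal A) (a : A)
    (e : ℕ) : bracketPow (I.colon {a}) (p ^ e) = (bracketPow I (p ^ e)).colon {a ^ p ^ e} :=
  (hA.iterateFrobenius e).map_colon_singleton I a

lemma testIdeal_le_iff (hA : ProjectiveRingHom (frobenius A p)) {f : A} {e : ℕ} {I : Ideal A} :
    testIdeal p f e ≤ I ↔ f ^ (p ^ e - 1) ∈ bracketPow I (p ^ e) := by
  refine ⟨fun h => bracketPow_mono h _ ?_, fun h => sInf_le h⟩
  rw [testIdeal, bracketPow_eq_map_iterateFrobenius, (hA.iterateFrobenius e).map_sInf]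
  simp only [Submodule.mem_iInf]
  exact fun J hJ => hJ

/-- Equivalently, `P^{[p^e]}` is `P`-primary. -/
lemma colon_bracketPow_le (hA : ProjectiveRingHom (frobenius A p)) {P : Ideal A} (hP : P.IsPrime)
    {a : A} {e : ℕ} (ha : a ∉ bracketPow P (p ^ e)) : (bracketPow P (p ^ e)).colon {a} ≤ P := by
  intro s hs
  by_contra hsP
  have hPs : P.colon {s} = P := by
    ext x
    simp [Submodule.mem_colon_singleton, hP.mul_mem_iff_mem_or_mem, hsP]
  have hsa : s ^ p ^ e * a ∈ bracketPow P (p ^ e) :=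
    Ideal.mem_of_dvd _ (mul_dvd_mul_right (dvd_pow_self s (expChar_pow_pos A p e).ne') a)
      (Submodule.mem_colon_singleton.1 hs)
  rw [← hPs, bracketPow_colon_singleton hA, Submodule.mem_colon_singleton, smul_eq_mul,
    mul_comm] at ha
  exact ha hsa

lemma pow_sub_one_mem_bracketPow_add_iff (hA : ProjectiveRingHom (frobenius A p)) (f : A)
    (I : Ideal A) (d e : ℕ) :
    f ^ (p ^ (e + d) - 1) ∈ bracketPow I (p ^ (e + d)) ↔
      f ^ (p ^ e - 1) ∈ bracketPow ((bracketPow I (p ^ d)).colon {f ^ (p ^ d - 1)}) (p ^ e) := by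
  have hexp : p ^ (e + d) - 1 = p ^ e - 1 + (p ^ d - 1) * p ^ e := by
    have := expChar_pow_pos A p e
    have := Nat.le_mul_of_pos_left (p ^ e) (expChar_pow_pos A p d)
    rw [pow_add, mul_comm, Nat.sub_one_mul]
    lia
  rw [bracketPow_colon_singleton hA, bracketPow_bracketPow, Submodule.mem_colon_singleton,
    smul_eq_mul, ← pow_mul, ← pow_add, hexp]

lemma pow_sub_one_mem_bracketPow_iff (hA : ProjectiveRingHom (frobenius A p)) (f : A)
    {P : Ideal A} (hP : P.IsPrime) {e : ℕ} (he : 1 ≤ e) :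
    f ^ (p ^ e - 1) ∈ bracketPow P (p ^ e) ↔ f ^ (p ^ 1 - 1) ∈ bracketPow P (p ^ 1) := by
  induction e, he using Nat.le_induction with
  | base => rfl
  | succ e he ih =>
    rw [pow_sub_one_mem_bracketPow_add_iff hA]
    constructor
    · intro h
      by_contra hf
      exact hf (ih.1 (bracketPow_mono (colon_bracketPow_le hA hP hf) _ h))
    · intro hf
      have htop : (bracketPow P (p ^ 1)).colon {f ^ (p ^ 1 - 1)} = ⊤ :=
        (Submodule.colon_eq_top_iff_subset ..).2 (Set.singleton_subset_iff.2 hf)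
      rw [htop, bracketPow_eq_map_iterateFrobenius, Ideal.map_top]
      trivial

theorem radical_testIdeal_eq_general (hA : ProjectiveRingHom (frobenius A p)) (f : A) {e : ℕ}
    (he : 1 ≤ e) : (testIdeal p f e).radical = (testIdeal p f 1).radical := by
  have hle (P : Ideal A) (hP : P.IsPrime) : testIdeal p f e ≤ P ↔ testIdeal p f 1 ≤ P := by
    rw [testIdeal_le_iff hA, testIdeal_le_iff hA, pow_sub_one_mem_bracketPow_iff hA f hP he]
  simp only [Ideal.radical_eq_sInf]
  congr! 3 with P
  exact and_congr_left (hle P)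

end Frobenius

/-- For homogeneous `f` and every `e ≥ 1`,
`√τ(f^{1−1/p^e}) = √τ(f^{1−1/p})`. -/
theorem radical_testIdeal_eq {k : Type*} [Field k] {p n : ℕ} [Fact p.Prime] [CharP k p]
    (f : MvPolynomial (Fin (n + 1)) k) (d : ℕ) (hf : f.IsHomogeneous d)
    (e : ℕ) (he : 1 ≤ e) :
    (testIdeal p f e).radical = (testIdeal p f 1).radical := by
  exact radical_testIdeal_eq_general
    (ProjectiveRingHom.of_field (frobenius k p)).frobenius_mvPolynomial f he

end
end

section
/- Let f ∈ R be homogeneous with τ = τ(f^{1−1/p}) ⊆ m (so that M_e < ∞ for all e ≥ e_0). Then for every e ≥ e_0 one has M_{e+1} − (n+1)p^{e+1} ≤ M_e − (n+1)p^e; that is, the sequence {M_e − (n+1)p^e}_{e ≥ e_0} is nonincreasing. -/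
/-! Write `q = p ^ e ≤ q' = p ^ e'`. In characteristic `p` the ideal `m^{[e]}` is generated by the
powers `x_i ^ q`, so membership in it is read off exponent vectors, whence
`m^{[e']} : (x_0 ⋯ x_n) ^ (q' - q) = m^{[e]}`. Multiplication by `(x_0 ⋯ x_n) ^ (q' - q)` therefore
carries `(m^{[e]} : τ) \ m^{[e]}` into `(m^{[e']} : τ) \ m^{[e']}`, raising degrees by
`(n + 1) (q' - q)`. Starting from `1 ∈ (m : τ) \ m`, which is where `τ ⊆ m` enters, this gives the
finiteness of `M_e`; starting from an element of degree `M_e`, it gives the inequality. -/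

open MvPolynomial

noncomputable section

section MonomialIdeal

variable {σ R : Type*} [CommSemiring R] {g : MvPolynomial σ R}

theorem mem_span_range_X_pow_iff {a : σ → ℕ} :
    g ∈ Ideal.span (Set.range fun i => (X i : MvPolynomial σ R) ^ a i) ↔
      ∀ t ∈ g.support, ∃ i, a i ≤ t i := by
  have hrange : (Set.range fun i => (X i : MvPolynomial σ R) ^ a i) =
      (fun s => monomial s 1) '' Set.range fun i => Finsupp.single i (a i) := by
    simp only [X_pow_eq_monomial, ← Set.range_comp, Function.comp_def]
  simp only [hrange, mem_ideal_span_monomial_image, Set.exists_range_iff, Finsupp.single_le_iff]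

theorem support_monomial_one_mul (s : σ →₀ ℕ) :
    (monomial s 1 * g).support = g.support.map (addLeftEmbedding s) :=
  AddMonoidAlgebra.support_coeff_single_mul g 1 (by simp) s

theorem monomial_mul_mem_span_range_X_pow_iff {s : σ →₀ ℕ} {a : σ → ℕ} :
    monomial s 1 * g ∈ Ideal.span (Set.range fun i => (X i : MvPolynomial σ R) ^ (s i + a i)) ↔
      g ∈ Ideal.span (Set.range fun i => (X i : MvPolynomial σ R) ^ a i) := by
  simp only [mem_span_range_X_pow_iff, support_monomial_one_mul, Finset.forall_mem_map,
    addLeftEmbedding_apply, Finsupp.add_apply, add_le_add_iff_left]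

theorem prod_X_pow_mul_mem_span_range_X_pow_iff [Fintype σ] {a c : ℕ} :
    (∏ i, X i) ^ c * g ∈ Ideal.span (Set.range fun i => (X i : MvPolynomial σ R) ^ (c + a)) ↔
      g ∈ Ideal.span (Set.range fun i => (X i : MvPolynomial σ R) ^ a) := by
  have hmonomial : (∏ i, X i : MvPolynomial σ R) ^ c =
      monomial (Finsupp.equivFunOnFinite.symm fun _ => c) 1 := by
    rw [← Finset.prod_pow, prod_X_pow]
    congr 2
    ext i
    exact Finsupp.indicator_of_mem (Finset.mem_univ i) _
  rw [hmonomial]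
  exact monomial_mul_mem_span_range_X_pow_iff (s := Finsupp.equivFunOnFinite.symm fun _ => c)

theorem isHomogeneous_prod_X_pow [Fintype σ] (c : ℕ) :
    ((∏ i, X i : MvPolynomial σ R) ^ c).IsHomogeneous (Fintype.card σ * c) := by
  simpa using (IsHomogeneous.prod Finset.univ _ _ fun i _ => isHomogeneous_X R i).pow c

end MonomialIdeal

theorem mul_mem_colon_of_forall_mul_mem {A : Type*} [Semiring A] {I J : Ideal A} {x g : A}
    {τ : Set A} (h : ∀ u ∈ I, x * u ∈ J) (hg : g ∈ I.colon τ) : x * g ∈ J.colon τ := by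
  rw [Submodule.mem_colon] at hg ⊢
  intro t ht
  simpa only [smul_eq_mul, mul_assoc] using h _ (hg t ht)

section BracketPow

variable {A : Type*} [CommRing A]

theorem bracketPow_one (I : Ideal A) : bracketPow I 1 = I := by
  simp [bracketPow]

theorem bracketPow_span (p : ℕ) [ExpChar A p] (e : ℕ) (S : Set A) :
    bracketPow (Ideal.span S) (p ^ e) = Ideal.span ((fun u => u ^ p ^ e) '' S) :=
  -- `bracketPow I (p ^ e)` unfolds to `I.map (iterateFrobenius A p e)`
  Ideal.map_span (iterateFrobenius A p e) S

end BracketPow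

section MaximalIdeal

variable {k : Type*} [Field k] {n p : ℕ}

theorem one_notMem_mxI : (1 : MvPolynomial (Fin (n + 1)) k) ∉ mxI k n := by
  rw [mxI, ← Set.image_univ, mem_ideal_span_X_image]
  simp

theorem zero_mem_MeSet_zero {τ : Ideal (MvPolynomial (Fin (n + 1)) k)} (hτ : τ ≤ mxI k n) :
    0 ∈ MeSet k n p τ 0 := by
  refine ⟨1, ?_, ?_, isHomogeneous_one _ _⟩
  · rw [pow_zero, bracketPow_one, Submodule.mem_colon]
    intro t ht
    rw [one_smul]
    exact hτ ht
  · rw [pow_zero, bracketPow_one]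
    exact one_notMem_mxI

variable [ExpChar k p] {τ : Ideal (MvPolynomial (Fin (n + 1)) k)} {e e' : ℕ}

theorem bracketPow_mxI (e : ℕ) :
    bracketPow (mxI k n) (p ^ e) = Ideal.span (Set.range fun i => X i ^ p ^ e) := by
  rw [mxI, bracketPow_span, ← Set.range_comp, Function.comp_def]

theorem prod_X_pow_mul_mem_bracketPow_mxI_iff (h : e ≤ e') {g : MvPolynomial (Fin (n + 1)) k} :
    (∏ i, X i) ^ (p ^ e' - p ^ e) * g ∈ bracketPow (mxI k n) (p ^ e') ↔
      g ∈ bracketPow (mxI k n) (p ^ e) := by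
  have hq : p ^ e' - p ^ e + p ^ e = p ^ e' :=
    Nat.sub_add_cancel (Nat.pow_le_pow_right (expChar_pos k p) h)
  simpa only [bracketPow_mxI, hq] using
    prod_X_pow_mul_mem_span_range_X_pow_iff (g := g) (a := p ^ e) (c := p ^ e' - p ^ e)

theorem add_mem_MeSet (h : e ≤ e') {d : ℕ} (hd : d ∈ MeSet k n p τ e) :
    (n + 1) * (p ^ e' - p ^ e) + d ∈ MeSet k n p τ e' := by
  obtain ⟨g, hg_colon, hg_notMem, hg_deg⟩ := hd
  refine ⟨(∏ i, X i) ^ (p ^ e' - p ^ e) * g, ?_, ?_, ?_⟩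
  · exact mul_mem_colon_of_forall_mul_mem
      (fun _ => (prod_X_pow_mul_mem_bracketPow_mxI_iff h).mpr) hg_colon
  · rwa [prod_X_pow_mul_mem_bracketPow_mxI_iff h]
  · simpa only [Fintype.card_fin] using (isHomogeneous_prod_X_pow _).mul hg_deg

/-- So `Me` is a genuine minimum, not the junk value `sInf ∅ = 0`. -/
theorem MeSet_nonempty (hτ : τ ≤ mxI k n) (e : ℕ) : (MeSet k n p τ e).Nonempty :=
  ⟨_, add_mem_MeSet e.zero_le (zero_mem_MeSet_zero hτ)⟩

theorem Me_le_add_Me (hτ : τ ≤ mxI k n) (h : e ≤ e') :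
    Me k n p τ e' ≤ (n + 1) * (p ^ e' - p ^ e) + Me k n p τ e :=
  Nat.sInf_le (add_mem_MeSet h (Nat.sInf_mem (MeSet_nonempty hτ e)))

theorem Me_sub_nonincreasing_general (hτ : τ ≤ mxI k n) :
    Antitone fun e => (Me k n p τ e : ℤ) - (n + 1) * p ^ e := by
  intro e e' h
  have hq : p ^ e ≤ p ^ e' := Nat.pow_le_pow_right (expChar_pos k p) h
  have hMe := Me_le_add_Me (p := p) hτ h
  zify [hq] at hMe
  dsimp only
  linarith

end MaximalIdeal

/-- If `f` is homogeneous and `τ = τ(f^{1−1/p}) ⊆ m`, then for every `e ≥ e_0`,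
`M_{e+1} − (n+1)p^{e+1} ≤ M_e − (n+1)p^e`. -/
theorem Me_sub_nonincreasing {k : Type*} [Field k] {p n : ℕ} [Fact p.Prime] [CharP k p]
    (f : MvPolynomial (Fin (n + 1)) k) (d : ℕ) (hf : f.IsHomogeneous d)
    (hτ : testIdeal p f 1 ≤ mxI k n)
    (e : ℕ) (he : e0 k n p (testIdeal p f 1) ≤ e) :
    (Me k n p (testIdeal p f 1) (e + 1) : ℤ) - (n + 1) * p ^ (e + 1) ≤
      (Me k n p (testIdeal p f 1) e : ℤ) - (n + 1) * p ^ e :=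
  Me_sub_nonincreasing_general hτ e.le_succ

end
end

section
/- Let f ∈ R be homogeneous and assume τ = τ(f^{1−1/p}) ⊆ m (i.e., (R/fR)_m is not F-pure). Then √τ = m (i.e., R/fR has an isolated non-F-pure point at m) if and only if the sequence M_e − (n+1)p^e is constant for all sufficiently large e; equivalently, since this sequence is nonincreasing, if and only if it is bounded below. -/
/-!
In `k[x]`, with `q = p ^ e`, a polynomial lies in `m^{[e]}` iff all its multiples have coefficient
zero at the socle monomial `x^Q`, `Q = (q - 1, …, q - 1)`; hence `g ∈ (m^{[e]} : τ)` iff the pairing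
with `g`, that is, `t ↦` (coefficient of `x^Q` in `t g`), vanishes on `τ`. Multiplying `g` by a
power of `x_0 ⋯ x_n` carries the pairing for `e` to the one for `e + 1`, so `M_e - (n + 1) p ^ e` is
nonincreasing.

If `m ^ N ⊆ τ` and `g` has a nonzero coefficient at some `b ≤ Q`, then `x^(Q - b) ∉ τ`, so
`deg g > (n + 1)(q - 1) - N`. Conversely, if `√τ ≠ m`, then for every `D` some monomial of degree
`D` is missing from `τ`. A linear form vanishing on the homogeneous ideal `τ` but not at that
monomial is, in degree `D < q`, the pairing with some `g` of degree `(n + 1)(q - 1) - D`, so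
`M_e - (n + 1) p ^ e` is unbounded below.

The test ideal of a homogeneous `f` is homogeneous because `F^e_* k[x]` is free over `k[x]` on the
elements `l_i x^α`, where the `l_i` form a basis of `F^e_* k` and all `α_j < q`: the test ideal is
generated by the coordinates of `f ^ (q - 1)`, and these are homogeneous.
-/

open MvPolynomial

noncomputable section

/-- The Frobenius pushforward `F^e_* A`: the ring `A`, regarded as an algebra over itself through
the `e`-th iterate of Frobenius. In it `bracketPow I (p ^ e)` becomes the submodule `I • ⊤`. It is
a type synonym, to keep this algebra structure apart from `Algebra.id A`. -/
def FrobeniusPushforward (A : Type*) (_p _e : ℕ) : Type _ := A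

namespace FrobeniusPushforward

instance (A : Type*) [CommRing A] (p e : ℕ) : CommRing (FrobeniusPushforward A p e) :=
  inferInstanceAs (CommRing A)

/-- The identity map `A → F^e_* A`. -/
def of (A : Type*) [CommRing A] (p e : ℕ) : A ≃+* FrobeniusPushforward A p e := RingEquiv.refl A

variable {A : Type*} [CommRing A] {p e : ℕ} [ExpChar A p]

instance : Algebra A (FrobeniusPushforward A p e) :=
  ((of A p e).toRingHom.comp (iterateFrobenius A p e)).toAlgebra

lemma smul_of (c x : A) : c • of A p e x = of A p e (c ^ p ^ e * x) := rfl

lemma of_mem_smul_top_iff {I : Ideal A} {x : A} :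
    of A p e x ∈ I • (⊤ : Submodule A (FrobeniusPushforward A p e)) ↔
      x ∈ bracketPow I (p ^ e) := by
  rw [Ideal.smul_top_eq_map]
  rfl

end FrobeniusPushforward

open FrobeniusPushforward

lemma mem_ideal_smul_top_iff_repr_mem {A M ι : Type*} [CommRing A] [AddCommGroup M] [Module A M]
    (b : Module.Basis ι A M) {I : Ideal A} {x : M} :
    x ∈ I • (⊤ : Submodule A M) ↔ ∀ i, b.repr x i ∈ I := by
  refine ⟨fun hx i => ?_, fun hx => ?_⟩
  · have : b.coord i x ∈ I * ⊤ :=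
      Submodule.smul_top_le_comap_smul_top I (b.coord i) hx
    simpa using this
  · rw [← b.linearCombination_repr x, Finsupp.linearCombination_apply]
    exact Submodule.sum_mem _ fun i _ => Submodule.smul_mem_smul (hx i) Submodule.mem_top

/-- When `F^e_* A` is free, the infimum defining the test ideal is attained. -/
lemma testIdeal_eq_span_repr {A ι : Type*} [CommRing A] {p e : ℕ} [ExpChar A p]
    (b : Module.Basis ι A (FrobeniusPushforward A p e)) (f : A) :
    testIdeal p f e = Ideal.span (Set.range (b.repr (of A p e (f ^ (p ^ e - 1))))) := by
  have hmem : ∀ a : Ideal A, f ^ (p ^ e - 1) ∈ bracketPow a (p ^ e) ↔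
      Ideal.span (Set.range (b.repr (of A p e (f ^ (p ^ e - 1))))) ≤ a := fun a => by
    rw [← of_mem_smul_top_iff, mem_ideal_smul_top_iff_repr_mem b, Ideal.span_le,
      Set.range_subset_iff]
    rfl
  simp only [testIdeal, hmem]
  exact csInf_Ici

/-! ### Frobenius on a polynomial ring -/

/-- The exponents with all entries less than `q`, that is, the residues of exponents modulo `q`. -/
abbrev ReducedExponent (σ : Type*) (q : ℕ) : Type _ := {α : σ →₀ ℕ // ∀ i, α i < q}

namespace ReducedExponent

variable {σ : Type*} {q : ℕ}

lemma nsmul_add_eq_iff (α β : ReducedExponent σ q) {s t : σ →₀ ℕ} :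
    q • s + α.1 = q • t + β.1 ↔ s = t ∧ α = β := by
  refine ⟨fun h => ?_, fun ⟨hs, hαβ⟩ => hs ▸ hαβ ▸ rfl⟩
  have h' : ∀ i, q * s i + α.1 i = q * t i + β.1 i := fun i => DFunLike.congr_fun h i
  refine ⟨Finsupp.ext fun i => ?_, Subtype.ext <| Finsupp.ext fun i => ?_⟩
  · simpa [Nat.mul_add_div ((Nat.zero_le _).trans_lt (α.2 i)), Nat.div_eq_of_lt (α.2 i),
      Nat.div_eq_of_lt (β.2 i)] using congrArg (· / q) (h' i)
  · simpa [Nat.mul_add_mod, Nat.mod_eq_of_lt (α.2 i), Nat.mod_eq_of_lt (β.2 i)] using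
      congrArg (· % q) (h' i)

lemma nsmul_add_injective (α : ReducedExponent σ q) :
    Function.Injective fun s : σ →₀ ℕ => q • s + α.1 :=
  fun _ _ h => ((nsmul_add_eq_iff α α).1 h).1

lemma nsmul_le_nsmul_add_iff (α : ReducedExponent σ q) {s t : σ →₀ ℕ} :
    q • t ≤ q • s + α.1 ↔ t ≤ s := by
  refine ⟨fun h i => ?_, fun h => (nsmul_le_nsmul_right h q).trans le_self_add⟩
  have h' : q * t i < q * (s i + 1) := (h i).trans_lt (Nat.add_lt_add_left (α.2 i) _)
  exact Nat.lt_succ_iff.1 (Nat.lt_of_mul_lt_mul_left h')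

lemma exists_eq_nsmul_add (hq : 0 < q) (b : σ →₀ ℕ) :
    ∃ (s : σ →₀ ℕ) (α : ReducedExponent σ q), b = q • s + α.1 :=
  ⟨b.mapRange (· / q) (Nat.zero_div q),
    ⟨b.mapRange (· % q) (Nat.zero_mod q), fun i => Nat.mod_lt (b i) hq⟩,
    Finsupp.ext fun i => (Nat.div_add_mod (b i) q).symm⟩

end ReducedExponent

section FrobeniusBasis

variable {k σ : Type*} [CommRing k] {p e : ℕ} [ExpChar k p]

/-- The projection of `F^e_* k[x]` onto the summand of the monomials congruent to `x^α` modulo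
`q = p ^ e`, with `φ : F^e_* k → k` applied to the coefficients: `∑ c_b x^b` is sent to
`∑ φ(c_{q s + α}) x^s`. This is the underlying additive map of `frobeniusProj`. -/
def frobeniusProjAddHom (φ : FrobeniusPushforward k p e →ₗ[k] k)
    (α : ReducedExponent σ (p ^ e)) :
    FrobeniusPushforward (MvPolynomial σ k) p e →+ MvPolynomial σ k where
  toFun F := .ofCoeff <| ((AddMonoidAlgebra.coeff ((of (MvPolynomial σ k) p e).symm F)).comapDomain
    _ α.nsmul_add_injective.injOn).mapRange (fun c => φ (of k p e c)) (by simp)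
  map_zero' := by ext; simp [coeff]
  map_add' F G := by ext; simp [coeff]

lemma coeff_frobeniusProjAddHom (φ : FrobeniusPushforward k p e →ₗ[k] k)
    (α : ReducedExponent σ (p ^ e)) (F : MvPolynomial σ k) (s : σ →₀ ℕ) :
    coeff s (frobeniusProjAddHom φ α (of _ p e F)) = φ (of k p e (coeff (p ^ e • s + α.1) F)) :=
  rfl

lemma frobeniusProjAddHom_smul (φ : FrobeniusPushforward k p e →ₗ[k] k)
    (α : ReducedExponent σ (p ^ e)) (u : MvPolynomial σ k)
    (F : FrobeniusPushforward (MvPolynomial σ k) p e) :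
    frobeniusProjAddHom φ α (u • F) = u * frobeniusProjAddHom φ α F := by
  obtain ⟨F, rfl⟩ := (of _ p e).surjective F
  induction u using MvPolynomial.induction_on' with
  | add u v hu hv => rw [add_smul, map_add, hu, hv, add_mul]
  | monomial t c =>
    ext s
    rw [smul_of, coeff_frobeniusProjAddHom, monomial_pow]
    by_cases hts : t ≤ s
    · obtain ⟨r, rfl⟩ := exists_add_of_le hts
      rw [nsmul_add, add_assoc, coeff_monomial_mul, coeff_monomial_mul, ← smul_of, map_smul,
        smul_eq_mul, coeff_frobeniusProjAddHom]
    · rw [coeff_monomial_mul', if_neg (mt α.nsmul_le_nsmul_add_iff.1 hts), coeff_monomial_mul',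
        if_neg hts, map_zero, map_zero]

/-- `frobeniusProjAddHom` as a linear form on `F^e_* k[x]` over `k[x]`. -/
def frobeniusProj (φ : FrobeniusPushforward k p e →ₗ[k] k) (α : ReducedExponent σ (p ^ e)) :
    FrobeniusPushforward (MvPolynomial σ k) p e →ₗ[MvPolynomial σ k] MvPolynomial σ k where
  __ := frobeniusProjAddHom φ α
  map_smul' := frobeniusProjAddHom_smul φ α

lemma coeff_frobeniusProj (φ : FrobeniusPushforward k p e →ₗ[k] k)
    (α : ReducedExponent σ (p ^ e)) (F : MvPolynomial σ k) (s : σ →₀ ℕ) :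
    coeff s (frobeniusProj φ α (of _ p e F)) = φ (of k p e (coeff (p ^ e • s + α.1) F)) :=
  rfl

lemma frobeniusProj_monomial [DecidableEq σ] (φ : FrobeniusPushforward k p e →ₗ[k] k)
    (α β : ReducedExponent σ (p ^ e)) (c : k) :
    frobeniusProj φ β (of _ p e (monomial α.1 c)) = if α = β then C (φ (of k p e c)) else 0 := by
  ext s
  have hα : α.1 = p ^ e • s + β.1 ↔ 0 = s ∧ α = β := by
    simpa using α.nsmul_add_eq_iff β (s := 0) (t := s)
  simp only [coeff_frobeniusProj, coeff_monomial, hα, apply_ite (coeff s), coeff_C, coeff_zero]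
  split_ifs <;> simp_all

lemma isHomogeneous_frobeniusProj (φ : FrobeniusPushforward k p e →ₗ[k] k)
    (α : ReducedExponent σ (p ^ e)) {F : MvPolynomial σ k} {d : ℕ} (hF : F.IsHomogeneous d) :
    (frobeniusProj φ α (of _ p e F)).IsHomogeneous ((d - α.1.degree) / p ^ e) := by
  intro s hs
  rw [coeff_frobeniusProj] at hs
  have hF0 : coeff (p ^ e • s + α.1) F ≠ 0 := fun h => hs (by simp [h])
  have hp : 0 < p ^ e := pow_pos (expChar_pos k p) e
  have hd : p ^ e * s.degree + α.1.degree = d := by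
    simpa [Finsupp.degree_eq_weight_one] using! hF hF0
  rw [← hd, Nat.add_sub_cancel, Nat.mul_div_cancel_left _ hp]
  exact (DFunLike.congr_fun Finsupp.degree_eq_weight_one s).symm

lemma dualBases_frobeniusPushforward {ι : Type*}
    (l : Module.Basis ι k (FrobeniusPushforward k p e)) :
    Module.DualBases
      (fun j : ReducedExponent σ (p ^ e) × ι =>
        of (MvPolynomial σ k) p e (monomial j.1.1 ((of k p e).symm (l j.2))))
      (fun j => frobeniusProj (l.coord j.2) j.1) := by
  classical
  have hp : 0 < p ^ e := pow_pos (expChar_pos k p) e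
  refine ⟨fun j => ?_, fun j j' hj => ?_, fun {F G} hFG => ?_, fun F => ?_⟩
  · simp [frobeniusProj_monomial]
  · beta_reduce
    rw [frobeniusProj_monomial]
    split_ifs with hα
    · have hi : j'.2 ≠ j.2 := fun hi => hj (Prod.ext hα hi).symm
      simp [hi]
    · rfl
  · obtain ⟨F, rfl⟩ := (of _ p e).surjective F
    obtain ⟨G, rfl⟩ := (of _ p e).surjective G
    refine congrArg _ (MvPolynomial.ext _ _ fun b => (of k p e).injective (l.ext_elem fun i => ?_))
    obtain ⟨s, α, rfl⟩ := ReducedExponent.exists_eq_nsmul_add hp b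
    exact congrArg (coeff s) (hFG (α, i))
  · obtain ⟨F, rfl⟩ := (of _ p e).surjective F
    choose s r hsr using fun b : σ →₀ ℕ => ReducedExponent.exists_eq_nsmul_add hp b
    refine (F.support.finite_toSet.biUnion fun b _ =>
      ((l.repr (of k p e (coeff b F))).support.finite_toSet.image (r b, ·))).subset ?_
    rintro ⟨α, i⟩ hαi
    obtain ⟨t, ht⟩ := ne_zero_iff.1 hαi
    rw [coeff_frobeniusProj] at ht
    have hr : r (p ^ e • t + α.1) = α :=
      (((α.nsmul_add_eq_iff _).1 (hsr (p ^ e • t + α.1))).2).symm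
    refine Set.mem_biUnion (x := p ^ e • t + α.1) ?_ ⟨i, ?_, Prod.ext hr rfl⟩
    · exact mem_support_iff.2 fun h => ht (by simp [h])
    · exact Finsupp.mem_support_iff.2 ht

attribute [local instance] MvPolynomial.gradedAlgebra in
lemma isHomogeneous_testIdeal [Module.Free k (FrobeniusPushforward k p e)]
    {f : MvPolynomial σ k} {d : ℕ} (hf : f.IsHomogeneous d) :
    (testIdeal p f e).IsHomogeneous (homogeneousSubmodule σ k) := by
  let l := Module.Free.chooseBasis k (FrobeniusPushforward k p e)
  rw [testIdeal_eq_span_repr (dualBases_frobeniusPushforward l).basis]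
  refine Ideal.homogeneous_span _ _ ?_
  rintro _ ⟨j, rfl⟩
  exact ⟨_, isHomogeneous_frobeniusProj (l.coord j.2) j.1 (hf.pow (p ^ e - 1))⟩

end FrobeniusBasis

/-! ### The socle pairing modulo `m^{[e]}` -/

/-- The exponent `(q - 1, …, q - 1)` of the monomial spanning the socle of `k[x] / m^{[e]}`, where
`q = p ^ e`. -/
def socleExponent (σ : Type*) [Finite σ] (q : ℕ) : σ →₀ ℕ :=
  Finsupp.equivFunOnFinite.symm fun _ => q - 1

section SocleExponent

variable {σ : Type*}

lemma le_socleExponent_iff [Finite σ] {q : ℕ} (hq : 0 < q) {b : σ →₀ ℕ} :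
    b ≤ socleExponent σ q ↔ ∀ i, b i < q :=
  forall_congr' fun _ => Nat.le_sub_one_iff_lt hq

lemma le_socleExponent_of_degree_lt [Finite σ] {q : ℕ} {b : σ →₀ ℕ} (hb : b.degree < q) :
    b ≤ socleExponent σ q :=
  (le_socleExponent_iff (Nat.zero_lt_of_lt hb)).2 fun i => (Finsupp.le_degree i b).trans_lt hb

lemma socleExponent_mono [Finite σ] : Monotone (socleExponent σ) :=
  fun _ _ h _ => Nat.sub_le_sub_right h 1

lemma degree_socleExponent [Fintype σ] (q : ℕ) :
    (socleExponent σ q).degree = Fintype.card σ * (q - 1) := by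
  simp [socleExponent, Finsupp.degree_eq_sum]

end SocleExponent

lemma coeff_monomial_tsub_mul {k σ : Type*} [CommSemiring k] {b c : σ →₀ ℕ} (h : b ≤ c) (r : k)
    (u : MvPolynomial σ k) : coeff c (monomial (c - b) r * u) = r * coeff b u := by
  rw [coeff_monomial_mul', if_pos tsub_le_self, tsub_tsub_cancel_of_le h]

section SoclePairing

variable {k σ : Type*} [CommRing k] {p e : ℕ} [ExpChar k p] {g : MvPolynomial σ k}

lemma mem_bracketPow_idealOfVars :
    g ∈ bracketPow (idealOfVars σ k) (p ^ e) ↔ ∀ b, (∀ i, b i < p ^ e) → coeff b g = 0 := by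
  have hmap : bracketPow (idealOfVars σ k) (p ^ e) =
      (idealOfVars σ k).map (iterateFrobenius (MvPolynomial σ k) p e) := rfl
  have hspan : bracketPow (idealOfVars σ k) (p ^ e) = Ideal.span ((fun s => monomial s (1 : k)) ''
      Set.range fun i => Finsupp.single i (p ^ e)) := by
    rw [hmap, idealOfVars, Ideal.map_span, ← Set.range_comp, ← Set.range_comp]
    simp only [Function.comp_def, iterateFrobenius_def, X_pow_eq_monomial]
  simp only [hspan, mem_ideal_span_monomial_image, Set.exists_range_iff, Finsupp.single_le_iff,
    mem_support_iff]
  refine forall_congr' fun b => ?_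
  rw [← not_imp_not]
  push Not
  rfl

variable [Finite σ]

lemma mem_bracketPow_idealOfVars_iff_coeff :
    g ∈ bracketPow (idealOfVars σ k) (p ^ e) ↔
      ∀ b ≤ socleExponent σ (p ^ e), coeff b g = 0 := by
  simp only [mem_bracketPow_idealOfVars, le_socleExponent_iff (pow_pos (expChar_pos k p) e)]

lemma mem_bracketPow_idealOfVars_iff_pairing :
    g ∈ bracketPow (idealOfVars σ k) (p ^ e) ↔
      ∀ u, coeff (socleExponent σ (p ^ e)) (u * g) = 0 := by
  refine ⟨fun hg u => ?_, fun hg => mem_bracketPow_idealOfVars_iff_coeff.2 fun b hb => ?_⟩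
  · exact mem_bracketPow_idealOfVars_iff_coeff.1 (Ideal.mul_mem_left _ u hg) _ le_rfl
  · simpa [coeff_monomial_tsub_mul hb] using hg (monomial (socleExponent σ (p ^ e) - b) 1)

lemma mem_colon_bracketPow_iff_pairing {τ : Ideal (MvPolynomial σ k)} :
    g ∈ (bracketPow (idealOfVars σ k) (p ^ e)).colon τ ↔
      ∀ t ∈ τ, coeff (socleExponent σ (p ^ e)) (t * g) = 0 := by
  simp only [Submodule.mem_colon, smul_eq_mul, mem_bracketPow_idealOfVars_iff_pairing]
  refine ⟨fun hg t ht => ?_, fun hg t ht u => ?_⟩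
  · simpa [mul_comm] using hg t ht 1
  · rw [mul_comm g, ← mul_assoc]
    exact hg (u * t) (τ.mul_mem_left u ht)

end SoclePairing

lemma mem_finsuppAntidiag_univ_iff_degree_eq {σ : Type*} [Fintype σ] [DecidableEq σ] {D : ℕ}
    {b : σ →₀ ℕ} : b ∈ Finset.univ.finsuppAntidiag D ↔ b.degree = D := by
  simp [Finset.mem_finsuppAntidiag, Finsupp.degree_eq_sum]

lemma homogeneousComponent_eq_sum_smul_monomial {k σ : Type*} [CommSemiring k] [Fintype σ]
    [DecidableEq σ] (D : ℕ) (u : MvPolynomial σ k) :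
    homogeneousComponent D u =
      ∑ b ∈ Finset.univ.finsuppAntidiag D, coeff b u • monomial b (1 : k) := by
  ext b
  simp only [coeff_homogeneousComponent, coeff_sum, coeff_smul, coeff_monomial, smul_eq_mul,
    mul_ite, mul_one, mul_zero, Finset.sum_ite_eq', mem_finsuppAntidiag_univ_iff_degree_eq]

lemma exists_isHomogeneous_pairing_eq {k σ : Type*} [CommSemiring k] [Finite σ] {D q : ℕ}
    (hD : D < q) (φ : MvPolynomial σ k →ₗ[k] k) :
    ∃ g : MvPolynomial σ k, g.IsHomogeneous ((socleExponent σ q).degree - D) ∧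
      ∀ u, coeff (socleExponent σ q) (u * g) = φ (homogeneousComponent D u) := by
  classical
  have := Fintype.ofFinite σ
  let Q := socleExponent σ q
  have hdeg : ∀ b ∈ (Finset.univ : Finset σ).finsuppAntidiag D, b.degree = D :=
    fun b => mem_finsuppAntidiag_univ_iff_degree_eq.1
  have hQ : ∀ b ∈ (Finset.univ : Finset σ).finsuppAntidiag D, b ≤ Q := fun b hb =>
    le_socleExponent_of_degree_lt ((hdeg b hb).trans_lt hD)
  refine ⟨∑ b ∈ Finset.univ.finsuppAntidiag D, monomial (Q - b) (φ (monomial b 1)),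
    IsHomogeneous.sum _ _ _ fun b hb => ?_, fun u => ?_⟩
  · refine isHomogeneous_monomial _ ?_
    rw [← map_tsub_of_le Finsupp.degree _ _ (hQ b hb), hdeg b hb]
  · rw [homogeneousComponent_eq_sum_smul_monomial, map_sum, Finset.mul_sum, coeff_sum]
    refine Finset.sum_congr rfl fun b hb => ?_
    rw [mul_comm, coeff_monomial_tsub_mul (hQ b hb), map_smul, smul_eq_mul, mul_comm]

attribute [local instance] MvPolynomial.gradedAlgebra in
/-- Duality in `k[x] / m^{[e]}`: a linear form vanishing on `τ` but not at `u` is represented, in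
degree `D`, by pairing with some `g`; this `g` lies in `(m^{[e]} : τ) \ m^{[e]}`. -/
lemma exists_isHomogeneous_mem_colon_bracketPow {k σ : Type*} [Field k] [Finite σ] {p e D : ℕ}
    [ExpChar k p] {τ : Ideal (MvPolynomial σ k)} (hτ : τ.IsHomogeneous (homogeneousSubmodule σ k))
    {u : MvPolynomial σ k} (hu : u.IsHomogeneous D) (huτ : u ∉ τ) (hD : D < p ^ e) :
    ∃ g ∈ (bracketPow (idealOfVars σ k) (p ^ e)).colon τ,
      g ∉ bracketPow (idealOfVars σ k) (p ^ e) ∧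
        g.IsHomogeneous ((socleExponent σ (p ^ e)).degree - D) := by
  obtain ⟨φ, hφu, hφτ⟩ := Submodule.exists_le_ker_of_notMem (K := k)
    (p := τ.restrictScalars k) (v := u) huτ
  obtain ⟨g, hg, hpair⟩ := exists_isHomogeneous_pairing_eq hD φ
  refine ⟨g, mem_colon_bracketPow_iff_pairing.2 fun t ht => ?_, fun hmem => hφu ?_, hg⟩
  · rw [hpair]
    exact hφτ ((mem_iff_homogeneousComponent_mem hτ t).1 ht D)
  · rw [← mem_bracketPow_idealOfVars_iff_pairing.1 hmem u, hpair,
      homogeneousComponent_of_mem hu, if_pos rfl]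

/-! ### Bounds for `M_e` -/

section Me

variable {k : Type*} [Field k] {n p : ℕ} [ExpChar k p]
  {τ : Ideal (MvPolynomial (Fin (n + 1)) k)}

lemma mem_MeSet_iff {e d : ℕ} :
    d ∈ MeSet k n p τ e ↔ ∃ g : MvPolynomial (Fin (n + 1)) k,
      (∀ t ∈ τ, coeff (socleExponent _ (p ^ e)) (t * g) = 0) ∧
      (∃ u, coeff (socleExponent _ (p ^ e)) (u * g) ≠ 0) ∧ g.IsHomogeneous d := by
  refine exists_congr fun g => and_congr mem_colon_bracketPow_iff_pairing (and_congr ?_ Iff.rfl)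
  exact mem_bracketPow_idealOfVars_iff_pairing.not.trans not_forall

lemma degree_socleExponent_mem_MeSet (hτ : τ ≤ mxI k n) (e : ℕ) :
    (socleExponent (Fin (n + 1)) (p ^ e)).degree ∈ MeSet k n p τ e := by
  refine mem_MeSet_iff.2 ⟨monomial (socleExponent _ (p ^ e)) 1, fun t ht => ?_, ⟨1, by simp⟩,
    isHomogeneous_monomial _ rfl⟩
  have ht' : t ∈ idealOfVars (Fin (n + 1)) k ^ 1 := by
    rw [pow_one]
    exact hτ ht
  have ht0 : coeff 0 t = 0 := (mem_pow_idealOfVars_iff' 1 t).1 ht' 0 (by simp)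
  simpa [ht0] using coeff_mul_monomial 0 (socleExponent _ (p ^ e)) 1 t

lemma Me_mem_MeSet (hτ : τ ≤ mxI k n) (e : ℕ) : Me k n p τ e ∈ MeSet k n p τ e :=
  Nat.sInf_mem ⟨_, degree_socleExponent_mem_MeSet hτ e⟩

/-- Multiply by the power of `x_0 ⋯ x_n` that carries one socle monomial to the next. -/
lemma Me_succ_le (hτ : τ ≤ mxI k n) (e : ℕ) :
    Me k n p τ (e + 1) + (n + 1) * p ^ e ≤ Me k n p τ e + (n + 1) * p ^ (e + 1) := by
  obtain ⟨g, hgτ, ⟨u, hu⟩, hg⟩ := mem_MeSet_iff.1 (Me_mem_MeSet (p := p) hτ e)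
  have hq : 1 ≤ p ^ e := Nat.one_le_pow _ _ (expChar_pos k p)
  have hqq : p ^ e ≤ p ^ (e + 1) := Nat.pow_le_pow_right (expChar_pos k p) e.le_succ
  let Q := socleExponent (Fin (n + 1)) (p ^ e)
  let Q' := socleExponent (Fin (n + 1)) (p ^ (e + 1))
  have hQ : Q ≤ Q' := socleExponent_mono hqq
  have hshift : ∀ v, coeff Q' (v * (monomial (Q' - Q) 1 * g)) = coeff Q (v * g) := fun v => by
    rw [mul_left_comm, coeff_monomial_tsub_mul hQ, one_mul]
  have hle : Me k n p τ (e + 1) ≤ (Q' - Q).degree + Me k n p τ e :=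
    Nat.sInf_le <| mem_MeSet_iff.2 ⟨monomial (Q' - Q) 1 * g,
      fun t ht => (hshift t).trans (hgτ t ht), ⟨u, fun h => hu ((hshift u).symm.trans h)⟩,
      (isHomogeneous_monomial 1 rfl).mul hg⟩
  rw [← map_tsub_of_le Finsupp.degree _ _ hQ, degree_socleExponent,
    degree_socleExponent, Fintype.card_fin] at hle
  have hqq' := Nat.mul_le_mul_left (n + 1) (Nat.sub_le_sub_right hqq 1)
  zify [hq, hq.trans hqq, hqq'] at hle ⊢
  linarith

lemma le_Me_of_pow_le (hτ : τ ≤ mxI k n) {N : ℕ} (hN : mxI k n ^ N ≤ τ) (e : ℕ) :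
    (n + 1) * (p ^ e - 1) ≤ Me k n p τ e + N := by
  obtain ⟨g, hgτ, hgm, hg⟩ := Me_mem_MeSet (p := p) hτ e
  obtain ⟨b, hb, hgb⟩ : ∃ b ≤ socleExponent (Fin (n + 1)) (p ^ e), coeff b g ≠ 0 := by
    by_contra! h
    exact hgm (mem_bracketPow_idealOfVars_iff_coeff.2 h)
  have hbτ : monomial (socleExponent _ (p ^ e) - b) (1 : k) ∉ τ := fun h => hgb <| by
    simpa [coeff_monomial_tsub_mul hb] using mem_colon_bracketPow_iff_pairing.1 hgτ _ h
  have hbN : (socleExponent _ (p ^ e) - b).degree < N := by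
    by_contra! h
    exact hbτ (hN ((monomial_mem_pow_idealOfVars_iff N _ one_ne_zero).2 h))
  have hdeg : b.degree = Me k n p τ e := by
    rw [Finsupp.degree_eq_weight_one]
    exact hg hgb
  rw [← map_tsub_of_le Finsupp.degree _ _ hb, degree_socleExponent, Fintype.card_fin, hdeg] at hbN
  omega

attribute [local instance] MvPolynomial.gradedAlgebra in
lemma Me_add_degree_le (hτ : τ.IsHomogeneous (homogeneousSubmodule _ k))
    {a : Fin (n + 1) →₀ ℕ} (ha : monomial a (1 : k) ∉ τ) {e : ℕ} (he : a.degree < p ^ e) :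
    Me k n p τ e + a.degree ≤ (n + 1) * (p ^ e - 1) := by
  have hle : Me k n p τ e ≤ (socleExponent (Fin (n + 1)) (p ^ e)).degree - a.degree :=
    Nat.sInf_le <|
      exists_isHomogeneous_mem_colon_bracketPow hτ (isHomogeneous_monomial 1 rfl) ha he
  have haQ : a.degree ≤ (socleExponent (Fin (n + 1)) (p ^ e)).degree :=
    Finsupp.degree_mono (le_socleExponent_of_degree_lt he)
  rw [degree_socleExponent, Fintype.card_fin] at hle haQ
  omega

end Me

/-! ### Eventual constancy -/

lemma isRadical_idealOfVars {k σ : Type*} [CommRing k] [IsReduced k] :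
    (idealOfVars σ k).IsRadical := by
  have hmem : ∀ u, u ∈ idealOfVars σ k ↔ constantCoeff u = 0 := fun u => by
    rw [← pow_one (idealOfVars σ k), mem_pow_idealOfVars_iff']
    simp [constantCoeff_eq, Finsupp.degree_eq_zero_iff]
  rintro u ⟨j, hj⟩
  rw [hmem, map_pow] at hj
  exact (hmem u).2 (eq_zero_of_pow_eq_zero hj)

lemma radical_eq_iff_exists_pow_le {A : Type*} [CommRing A] {I m : Ideal A} (hm : m.IsRadical)
    (hfg : m.FG) (hI : I ≤ m) : I.radical = m ↔ ∃ N, m ^ N ≤ I := by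
  refine ⟨?_, fun ⟨N, hN⟩ => le_antisymm (hm.radical_le_iff.2 hI) fun u hu =>
    ⟨N, hN (Ideal.pow_mem_pow hu N)⟩⟩
  rintro rfl
  exact I.exists_radical_pow_le_of_fg hfg

lemma radical_eq_mxI_iff {k : Type*} [Field k] {n : ℕ} {τ : Ideal (MvPolynomial (Fin (n + 1)) k)}
    (hτ : τ ≤ mxI k n) : τ.radical = mxI k n ↔ ∃ N, mxI k n ^ N ≤ τ :=
  radical_eq_iff_exists_pow_le isRadical_idealOfVars (mxI k n).fg_of_isNoetherianRing hτ

lemma exists_eventually_eq_of_antitone_of_bddBelow {u : ℕ → ℤ} (hu : Antitone u)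
    (hbdd : BddBelow (Set.range u)) : ∃ c, ∃ E, ∀ e ≥ E, u e = c := by
  have h := tendsto_atTop_ciInf hu hbdd
  rw [nhds_discrete, Filter.tendsto_pure, Filter.eventually_atTop] at h
  exact ⟨_, h⟩

/-- The sequence `M_e - (n + 1) p ^ e` of the theorem, with the subtraction in `ℤ`. -/
def shiftedMe (k : Type*) [Field k] (n p : ℕ) (τ : Ideal (MvPolynomial (Fin (n + 1)) k))
    (e : ℕ) : ℤ :=
  Me k n p τ e - (n + 1) * p ^ e

section ShiftedMe

variable {k : Type*} [Field k] {n p : ℕ} {τ : Ideal (MvPolynomial (Fin (n + 1)) k)}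

lemma antitone_shiftedMe [ExpChar k p] (hτ : τ ≤ mxI k n) : Antitone (shiftedMe k n p τ) :=
  antitone_nat_of_succ_le fun e => by
    have h := Me_succ_le (p := p) hτ e
    zify at h
    simp only [shiftedMe]
    linarith

lemma bddBelow_range_shiftedMe [ExpChar k p] (hτ : τ ≤ mxI k n) (hrad : τ.radical = mxI k n) :
    BddBelow (Set.range (shiftedMe k n p τ)) := by
  obtain ⟨N, hN⟩ := (radical_eq_mxI_iff hτ).1 hrad
  refine ⟨-(n + 1) - N, Set.forall_mem_range.2 fun e => ?_⟩
  have h := le_Me_of_pow_le (p := p) hτ hN e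
  zify [Nat.one_le_pow e p (expChar_pos k p)] at h
  simp only [shiftedMe]
  linarith

attribute [local instance] MvPolynomial.gradedAlgebra in
lemma radical_eq_mxI_of_le_shiftedMe [Fact p.Prime] [CharP k p] (hτ : τ ≤ mxI k n)
    (hhom : τ.IsHomogeneous (homogeneousSubmodule _ k)) {B : ℤ} {E : ℕ}
    (hB : ∀ e ≥ E, B ≤ shiftedMe k n p τ e) : τ.radical = mxI k n := by
  refine (radical_eq_mxI_iff hτ).2 ⟨B.natAbs, ?_⟩
  rw [show mxI k n = idealOfVars _ k from rfl, pow_idealOfVars_eq_span, Ideal.span_le]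
  rintro _ ⟨a, ha, rfl⟩
  by_contra haτ
  have hp := (Fact.out : p.Prime).one_lt
  let e := max E a.degree
  have he : a.degree < p ^ e := (le_max_right _ _).trans_lt (Nat.lt_pow_self hp)
  have hlower := hB e (le_max_left _ _)
  have hupper := Me_add_degree_le hhom haτ he
  zify [Nat.one_le_pow e p hp.le] at hupper
  have hdeg : -(a.degree : ℤ) ≤ B := by
    rw [show a.degree = B.natAbs from ha]
    omega
  simp only [shiftedMe] at hlower
  linarith

end ShiftedMe

attribute [local instance] MvPolynomial.gradedAlgebra in
theorem isolated_nonFPure_iff_Me_eventually_constant_general {k : Type*} [Field k] {p n : ℕ}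
    [Fact p.Prime] [CharP k p] {τ : Ideal (MvPolynomial (Fin (n + 1)) k)}
    (hhom : τ.IsHomogeneous (homogeneousSubmodule _ k)) (hτ : τ ≤ mxI k n) :
    (τ.radical = mxI k n ↔
      ∃ c : ℤ, ∃ E : ℕ, ∀ e ≥ E, (Me k n p τ e : ℤ) - (n + 1) * p ^ e = c) ∧
    (τ.radical = mxI k n ↔
      ∃ B : ℤ, ∀ e ≥ e0 k n p τ, B ≤ (Me k n p τ e : ℤ) - (n + 1) * p ^ e) := by
  refine ⟨⟨fun hrad => ?_, fun ⟨c, E, hc⟩ => ?_⟩, ⟨fun hrad => ?_, fun ⟨B, hB⟩ => ?_⟩⟩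
  · exact exists_eventually_eq_of_antitone_of_bddBelow (antitone_shiftedMe hτ)
      (bddBelow_range_shiftedMe hτ hrad)
  · exact radical_eq_mxI_of_le_shiftedMe hτ hhom fun e he => (hc e he).ge
  · obtain ⟨B, hB⟩ := bddBelow_range_shiftedMe (p := p) hτ hrad
    exact ⟨B, fun e _ => hB ⟨e, rfl⟩⟩
  · exact radical_eq_mxI_of_le_shiftedMe hτ hhom hB

/-- If `f` is homogeneous and `τ = τ(f^{1−1/p}) ⊆ m`, then `√τ = m` iff the
sequence `M_e − (n+1)p^e` is eventually constant; equivalently, iff it is bounded below. -/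
theorem isolated_nonFPure_iff_Me_eventually_constant {k : Type*} [Field k] {p n : ℕ}
    [Fact p.Prime] [CharP k p]
    (f : MvPolynomial (Fin (n + 1)) k) (d : ℕ) (hf : f.IsHomogeneous d)
    (hτ : testIdeal p f 1 ≤ mxI k n) :
    ((testIdeal p f 1).radical = mxI k n ↔
      ∃ c : ℤ, ∃ E : ℕ, ∀ e ≥ E,
        (Me k n p (testIdeal p f 1) e : ℤ) - (n + 1) * p ^ e = c) ∧
    ((testIdeal p f 1).radical = mxI k n ↔
      ∃ B : ℤ, ∀ e ≥ e0 k n p (testIdeal p f 1),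
        B ≤ (Me k n p (testIdeal p f 1) e : ℤ) - (n + 1) * p ^ e) :=
  isolated_nonFPure_iff_Me_eventually_constant_general (isHomogeneous_testIdeal hf) hτ

end
end

section
/- Let f ∈ R be homogeneous of degree d. Then the test ideal τ(f^{1−1/p}) is generated by homogeneous elements g satisfying p·deg(g) ≤ (p−1)d. (Concretely, writing f^{p−1} = Σ f_{i,b}^p λ_b x^{\underline{i}} over an R^p-basis {λ_b x^{\underline{i}}} of R with 0 ≤ i_j ≤ p−1 and {λ_b} a basis of k over k^p, the homogeneous components of the coefficients f_{i,b} generate τ(f^{1−1/p}) and each satisfies p·deg(f_{i,b}) + |\underline{i}| = (p−1)d.) -/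
/-!
Write `q = p ^ e` and let `R = k[x]`. If `k` has a basis `(λ_b)` over `k ^ q`, the elements
`λ_b x ^ i` with all `i_j < q` form a basis of `R` over `R ^ q`; expand
`g = ∑ g_{b,i} ^ q * (λ_b x ^ i)`. The maps `g ↦ g_{b,i}` are additive and satisfy
`(u ^ q * g)_{b,i} = u * g_{b,i}`, so they send the bracket power of an ideal `a` into `a`. Hence
`g` lies in the bracket power of `a` exactly when `a` contains all `g_{b,i}`: these coordinates
generate the smallest such ideal, which for `g = f ^ (q - 1)` is the test ideal. If `g` is
homogeneous of degree `D`, then `q * deg g_{b,i} + |i| = D` whenever `g_{b,i} ≠ 0`.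
-/

open MvPolynomial

noncomputable section

/-- A dual basis of `A` as a module over itself through `x ↦ x ^ q`: elements `vec b` and
`q⁻¹`-linear coordinate functions with `c = ∑ b, coord c b ^ q * vec b`. For `q = p ^ e` this is a
dual basis of the Frobenius pushforward `F^e_* A`; the `vec b` need not be linearly independent
over `A ^ q`. -/
structure FrobeniusDualBasis (ι A : Type*) [CommRing A] (q : ℕ) where
  vec : ι → A
  coord : A →+ ι →₀ A
  coord_pow_mul (x c : A) : coord (x ^ q * c) = x • coord c
  sum_coord (c : A) : ((coord c).sum fun b x => x ^ q * vec b) = c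

namespace FrobeniusDualBasis

section Ideal

variable {ι A : Type*} [CommRing A] {q : ℕ} (B : FrobeniusDualBasis ι A q)

lemma coord_mem_of_mem_bracketPow {a : Ideal A} {g : A} (hg : g ∈ bracketPow a q) (b : ι) :
    B.coord g b ∈ a := by
  unfold bracketPow at hg
  -- `coord` is not `A`-linear, so the induction is over sums of multiples `r * u ^ q`.
  induction hg using Submodule.closure_induction with
  | zero => simp
  | add x y _ _ hx hy => simpa using a.add_mem hx hy
  | smul_mem r _ hx =>
    obtain ⟨u, hu, rfl⟩ := hx
    simpa [mul_comm r, B.coord_pow_mul] using a.mul_mem_right _ hu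

lemma mem_bracketPow_iff {a : Ideal A} {g : A} :
    g ∈ bracketPow a q ↔ ∀ b, B.coord g b ∈ a := by
  refine ⟨B.coord_mem_of_mem_bracketPow, fun h => ?_⟩
  rw [← B.sum_coord g]
  exact Ideal.sum_mem _ fun b _ => Ideal.mul_mem_right _ _ (Ideal.subset_span ⟨_, h b, rfl⟩)

end Ideal

lemma span_range_coord_eq_testIdeal {ι A : Type*} [CommRing A] {p e : ℕ}
    (B : FrobeniusDualBasis ι A (p ^ e)) (f : A) :
    Ideal.span (Set.range (B.coord (f ^ (p ^ e - 1)))) = testIdeal p f e := by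
  have smallest (a : Ideal A) : f ^ (p ^ e - 1) ∈ bracketPow a (p ^ e) ↔
      Ideal.span (Set.range (B.coord (f ^ (p ^ e - 1)))) ≤ a := by
    rw [B.mem_bracketPow_iff, Ideal.span_le, Set.range_subset_iff]
    rfl
  exact le_antisymm (le_sInf fun a ha => (smallest a).1 ha) (sInf_le ((smallest _).2 le_rfl))

/-- The Frobenius dual basis given by a basis of `A` over a copy `K` of `A` which acts on `A`
through `q`-th powers. -/
def ofBasis {ι K A : Type*} [CommRing K] [CommRing A] [Algebra K A] {q : ℕ} (φ : A ≃+* K)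
    (hφ : ∀ x, algebraMap K A (φ x) = x ^ q) (b : Module.Basis ι K A) :
    FrobeniusDualBasis ι A q where
  vec := b
  coord := (Finsupp.mapRange.addMonoidHom φ.symm).comp (b.repr : A →+ ι →₀ K)
  coord_pow_mul x c := by
    ext j
    simp [← hφ, ← Algebra.smul_def]
  sum_coord c := by
    conv_rhs => rw [← b.linearCombination_repr c, Finsupp.linearCombination_apply]
    simp [Finsupp.sum_mapRange_index, Algebra.smul_def, ← hφ]

/-- The Frobenius dual basis of a field `k` given by a basis of `k` over `k ^ (p ^ e)`. -/
def ofField (k : Type*) [Field k] (p e : ℕ) [ExpChar k p] :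
    FrobeniusDualBasis (Module.Basis.ofVectorSpaceIndex (iterateFrobenius k p e).fieldRange k) k
      (p ^ e) :=
  ofBasis (iterateFrobenius k p e).rangeRestrictFieldEquiv (fun _ => rfl)
    (Module.Basis.ofVectorSpace _ k)

end FrobeniusDualBasis

section Exponents

variable {σ : Type*}

/-- The componentwise quotient of an exponent by `q`. -/
def expQuot (q : ℕ) (m : σ →₀ ℕ) : σ →₀ ℕ :=
  m.mapRange (· / q) (Nat.zero_div q)

/-- The componentwise remainder of an exponent modulo `q`. -/
def expRem (q : ℕ) (m : σ →₀ ℕ) : σ →₀ ℕ :=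
  m.mapRange (· % q) (Nat.zero_mod q)

lemma nsmul_expQuot_add_expRem (q : ℕ) (m : σ →₀ ℕ) : q • expQuot q m + expRem q m = m := by
  ext j
  simp [expQuot, expRem, Nat.div_add_mod]

lemma expQuot_nsmul_add {q : ℕ} (hq : 0 < q) (a m : σ →₀ ℕ) :
    expQuot q (q • a + m) = a + expQuot q m := by
  ext j
  simp [expQuot, Nat.mul_add_div hq]

lemma expRem_nsmul_add (q : ℕ) (a m : σ →₀ ℕ) : expRem q (q • a + m) = expRem q m := by
  ext j
  simp [expRem]

end Exponents

namespace FrobeniusDualBasis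

variable {σ ι k : Type*} [CommRing k]

section Coord

variable {q : ℕ} (B : FrobeniusDualBasis ι k q)

/-- The coordinates of a polynomial along the elements `vec b * x ^ i`, all `i_j < q`: the monomial
`c * x ^ m` contributes `coord c b * x ^ (m / q)` to the coordinate `(b, m % q)`. -/
def mvPolynomialCoord : MvPolynomial σ k →+ ι × (σ →₀ ℕ) →₀ MvPolynomial σ k :=
  (Finsupp.liftAddHom fun m : σ →₀ ℕ =>
    (Finsupp.liftAddHom fun b => (Finsupp.singleAddHom (b, expRem q m)).comp
      (monomial (expQuot q m)).toAddMonoidHom).comp B.coord).comp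
    AddMonoidAlgebra.coeffAddEquiv.toAddMonoidHom

lemma mvPolynomialCoord_monomial (m : σ →₀ ℕ) (c : k) :
    B.mvPolynomialCoord (monomial m c) = (B.coord c).sum fun b x =>
      Finsupp.single (b, expRem q m) (monomial (expQuot q m) x) :=
  Finsupp.liftAddHom_apply_single _ _ _

open Classical in
lemma mvPolynomialCoord_monomial_apply (m : σ →₀ ℕ) (c : k) (b : ι) (i : σ →₀ ℕ) :
    B.mvPolynomialCoord (monomial m c) (b, i) =
      if expRem q m = i then monomial (expQuot q m) (B.coord c b) else 0 := by
  rw [mvPolynomialCoord_monomial, Finsupp.sum_apply,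
    Finsupp.sum_eq_single b (fun b' _ hb => by simp [hb]) (by simp)]
  simp [Finsupp.single_apply]

end Coord

section ExpChar

variable {p e : ℕ} [ExpChar k p] (B : FrobeniusDualBasis ι k (p ^ e))

lemma mvPolynomialCoord_pow_mul (u g : MvPolynomial σ k) :
    B.mvPolynomialCoord (u ^ p ^ e * g) = u • B.mvPolynomialCoord g := by
  induction u using MvPolynomial.induction_on' with
  | add u v hu hv => rw [add_pow_expChar_pow, add_mul, map_add, hu, hv, add_smul]
  | monomial a c =>
    induction g using MvPolynomial.induction_on' with
    | add g h hg hh => rw [mul_add, map_add, hg, hh, map_add, smul_add]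
    | monomial m d =>
      ext1 ⟨b, i⟩
      rw [monomial_pow, monomial_mul, Finsupp.smul_apply, mvPolynomialCoord_monomial_apply,
        mvPolynomialCoord_monomial_apply, expRem_nsmul_add,
        expQuot_nsmul_add (expChar_pow_pos k p e), B.coord_pow_mul]
      split_ifs <;> simp [monomial_mul]

lemma sum_mvPolynomialCoord (g : MvPolynomial σ k) :
    ((B.mvPolynomialCoord g).sum fun j x => x ^ p ^ e * monomial j.2 (B.vec j.1)) = g := by
  have zero_pow_q : (0 : MvPolynomial σ k) ^ p ^ e = 0 := zero_pow (expChar_pow_pos k p e).ne'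
  induction g using MvPolynomial.induction_on' with
  | add g h hg hh =>
    rw [map_add, Finsupp.sum_add_index' (by simp [zero_pow_q])
      (by simp [add_pow_expChar_pow, add_mul]), hg, hh]
  | monomial m c =>
    rw [mvPolynomialCoord_monomial, Finsupp.sum_sum_index (by simp [zero_pow_q])
      (by simp [add_pow_expChar_pow, add_mul])]
    calc ((B.coord c).sum fun b x => (Finsupp.single (b, expRem (p ^ e) m)
          (monomial (expQuot (p ^ e) m) x)).sum fun j y => y ^ p ^ e * monomial j.2 (B.vec j.1))
      _ = (B.coord c).sum fun b x => monomial m (x ^ p ^ e * B.vec b) := by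
        simp [zero_pow_q, monomial_pow, monomial_mul, nsmul_expQuot_add_expRem]
      _ = monomial m c := by
        conv_rhs => rw [← B.sum_coord c, map_finsuppSum]

/-- The Frobenius dual basis `(vec b * x ^ i)` of `k[x]`. The exponents `i` are not restricted to
`i_j < p ^ e`, but the coordinates at all other `i` vanish. -/
def mvPolynomial (σ : Type*) :
    FrobeniusDualBasis (ι × (σ →₀ ℕ)) (MvPolynomial σ k) (p ^ e) where
  vec j := monomial j.2 (B.vec j.1)
  coord := B.mvPolynomialCoord
  coord_pow_mul := B.mvPolynomialCoord_pow_mul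
  sum_coord := B.sum_mvPolynomialCoord

end ExpChar

lemma isWeightedHomogeneous_mvPolynomialCoord {q : ℕ} (hq : 0 < q) (B : FrobeniusDualBasis ι k q)
    {w : σ → ℕ} {g : MvPolynomial σ k} {D : ℕ} (hg : g.IsWeightedHomogeneous w D)
    (b : ι) (i : σ →₀ ℕ) :
    (B.mvPolynomialCoord g (b, i)).IsWeightedHomogeneous w ((D - Finsupp.weight w i) / q) := by
  classical
  rw [g.as_sum, map_sum, Finsupp.finsetSum_apply]
  refine Submodule.sum_mem (weightedHomogeneousSubmodule k w _) fun m hm => ?_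
  rw [mvPolynomialCoord_monomial_apply]
  split_ifs with hi
  · have hD : D = q * Finsupp.weight w (expQuot q m) + Finsupp.weight w i := by
      rw [← hg (mem_support_iff.1 hm), ← smul_eq_mul, ← map_nsmul, ← map_add, ← hi,
        nsmul_expQuot_add_expRem]
    refine isWeightedHomogeneous_monomial w _ _ ?_
    rw [hD, Nat.add_sub_cancel, Nat.mul_div_cancel_left _ hq]
  · exact isWeightedHomogeneous_zero k w _

end FrobeniusDualBasis

theorem testIdeal_generated_by_low_degree_general {σ ι k : Type*} [CommRing k] {p e : ℕ}
    [ExpChar k p] (B : FrobeniusDualBasis ι k (p ^ e)) {w : σ → ℕ} {f : MvPolynomial σ k} {d : ℕ}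
    (hf : f.IsWeightedHomogeneous w d) :
    ∃ S : Set (MvPolynomial σ k),
      (∀ g ∈ S, ∃ dg : ℕ, g.IsWeightedHomogeneous w dg ∧ p ^ e * dg ≤ (p ^ e - 1) * d) ∧
      Ideal.span S = testIdeal p f e := by
  refine ⟨_, ?_, (B.mvPolynomial σ).span_range_coord_eq_testIdeal f⟩
  rintro _ ⟨⟨b, i⟩, rfl⟩
  exact ⟨_, B.isWeightedHomogeneous_mvPolynomialCoord (expChar_pow_pos k p e)
    (hf.pow (p ^ e - 1)) b i, (Nat.mul_div_le _ _).trans (Nat.sub_le _ _)⟩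

/-- If `f` is homogeneous of degree `d`, then `τ(f^{1−1/p})` is generated by
homogeneous elements `g` satisfying `p·deg(g) ≤ (p−1)d`. -/
theorem testIdeal_generated_by_low_degree {k : Type*} [Field k] {p n : ℕ}
    [Fact p.Prime] [CharP k p]
    (f : MvPolynomial (Fin (n + 1)) k) (d : ℕ) (hf : f.IsHomogeneous d) :
    ∃ S : Set (MvPolynomial (Fin (n + 1)) k),
      (∀ g ∈ S, ∃ dg : ℕ, g.IsHomogeneous dg ∧ p * dg ≤ (p - 1) * d) ∧
      Ideal.span S = testIdeal p f 1 := by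
  simpa only [pow_one, IsHomogeneous] using
    testIdeal_generated_by_low_degree_general (FrobeniusDualBasis.ofField k p 1) hf

end
end
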